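/- Let b be a prime and α ∈ ℕ with α ≥ 2. If k, l ∈ ℕ₀ satisfy κ(k ⊖ l) > 2α, then b̂_τ(k) · conj(b̂_τ(l)) = 0 for every integer 0 ≤ τ ≤ α. -/

import Mathlib

/-!
A polynomial of degree less than `κ(k)` is orthogonal to the Walsh function `wal_k`, so
`b̂_τ(k) = 0` as soon as `κ(k) > τ`. Since `κ(k ⊖ l) ≤ κ(k) + κ(l)`, one of the two factors must
vanish.

The orthogonality rests on the self-similarity `wal_k((j + y) / b) = ω_b^{κ_0 j} wal_{⌊k/b⌋}(y)`
for `0 ≤ j < b` and `0 ≤ y < 1`: cutting `[0, 1)` into `b` equal intervals turns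
`∫ p · conj(wal_k)` into `b⁻¹ ∫ q · conj(wal_{⌊k/b⌋})`, where
`q(y) = ∑_j ω_b^{-κ_0 j} p((j + y) / b)`. If `κ_0 ≠ 0`, then `∑_j ω_b^{-κ_0 j} = 0` kills the
leading coefficient of `q`, so that passing from `k` to `⌊k/b⌋` loses a nonzero digit only when it
also lowers the degree.
-/

open scoped BigOperators

/-- The `i`-th digit (starting from `i = 0`) of the `b`-adic expansion of `k`. -/
def bdigit (b k i : ℕ) : ℕ := k / b ^ i % b

/-- The set of indices of nonzero `b`-adic digits of `k`. -/
def bsupp (b k : ℕ) : Finset ℕ := (Finset.range (k + 1)).filter fun i => bdigit b k i ≠ 0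

/-- The Hamming metric `κ(k)`: the number of nonzero `b`-adic digits of `k`. -/
def hamming (b k : ℕ) : ℕ := (bsupp b k).card

/-- The Dick metric `μ_α(k)`: the sum of the `min(v, α)` largest exponents-plus-one
`a_1 > a_2 > ⋯` of the nonzero `b`-adic digits of `k`. -/
def dick (b α k : ℕ) : ℕ := ((((bsupp b k).sort (· ≤ ·)).reverse.take α).map (· + 1)).sum

/-- Digitwise addition `k ⊕ l` modulo `b` of the `b`-adic digits. -/
def dadd (b k l : ℕ) : ℕ :=
  ∑ i ∈ Finset.range (k + l + 1), (bdigit b k i + bdigit b l i) % b * b ^ i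

/-- Digitwise subtraction `k ⊖ l` modulo `b` of the `b`-adic digits. -/
def dsub (b k l : ℕ) : ℕ :=
  ∑ i ∈ Finset.range (k + l + 1), (bdigit b k i + (b - bdigit b l i)) % b * b ^ i

/-- Hamming metric of a vector: sum over coordinates. -/
def hammingVec (b : ℕ) {s : ℕ} (k : Fin s → ℕ) : ℕ := ∑ j, hamming b (k j)

/-- Dick metric of a vector: sum over coordinates. -/
def dickVec (b α : ℕ) {s : ℕ} (k : Fin s → ℕ) : ℕ := ∑ j, dick b α (k j)

open MeasureTheory

/-- The `i`-th (for `i ≥ 1`) `b`-adic digit `ξ_i` of a real number `x ∈ [0,1)`, using the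
expansion in which infinitely many digits differ from `b - 1`. -/
noncomputable def rdigit (b : ℕ) (x : ℝ) (i : ℕ) : ℤ := ⌊x * (b : ℝ) ^ i⌋ % b

/-- The `k`-th `b`-adic Walsh function, `wal_k(x) = ω_b^{κ_0 ξ_1 + κ_1 ξ_2 + ⋯}` where
`ω_b = exp(2π√-1/b)`, `κ` are the `b`-adic digits of `k` and `ξ` those of `x`. -/
noncomputable def walsh (b k : ℕ) (x : ℝ) : ℂ :=
  Complex.exp (2 * (Real.pi : ℂ) * Complex.I / (b : ℂ) *
    ∑ a ∈ Finset.range (k + 1), (bdigit b k a : ℂ) * (rdigit b x (a + 1) : ℂ))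

/-- The `k`-th `b`-adic Walsh function on `[0,1)^s`, `wal_k(x) = ∏_j wal_{k_j}(x_j)`. -/
noncomputable def walshVec (b : ℕ) {s : ℕ} (k : Fin s → ℕ) (x : Fin s → ℝ) : ℂ :=
  ∏ j, walsh b (k j) (x j)

/-- The Bernoulli polynomial `B_r` evaluated at a real number. -/
noncomputable def bernoulliPoly (r : ℕ) (x : ℝ) : ℝ := Polynomial.aeval x (Polynomial.bernoulli r)

/-- The reproducing kernel `K_α` of the Sobolev space `H_α`:
`K_α(x,y) = ∑_{r=0}^{α} B_r(x)B_r(y)/(r!)² + (-1)^{α+1} B_{2α}(|x-y|)/(2α)!`. -/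
noncomputable def Kker (α : ℕ) (x y : ℝ) : ℝ :=
  ∑ r ∈ Finset.range (α + 1), bernoulliPoly r x * bernoulliPoly r y / ((r.factorial : ℝ)) ^ 2
    + (-1 : ℝ) ^ (α + 1) * bernoulliPoly (2 * α) |x - y| / ((2 * α).factorial : ℝ)

/-- The `(k,l)`-th Walsh coefficient of the kernel `K_α`. -/
noncomputable def Khat (b α : ℕ) (k l : ℕ) : ℂ :=
  ∫ x in Set.Ico (0 : ℝ) 1, ∫ y in Set.Ico (0 : ℝ) 1,
    (Kker α x y : ℂ) * (starRingEnd ℂ) (walsh b k x) * walsh b l y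

/-- The `(k,l)`-th Walsh coefficient of the `s`-variate kernel
`K_{α,s}(x,y) = ∏_j K_α(x_j, y_j)`. -/
noncomputable def KhatS (b α s : ℕ) (k l : Fin s → ℕ) : ℂ :=
  ∫ x in Set.univ.pi fun _ : Fin s => Set.Ico (0 : ℝ) 1,
    ∫ y in Set.univ.pi fun _ : Fin s => Set.Ico (0 : ℝ) 1,
      ((∏ j, Kker α (x j) (y j) : ℝ) : ℂ) * (starRingEnd ℂ) (walshVec b k x) * walshVec b l y

/-- The `k`-th Walsh coefficient `b̂_r(k)` of the normalized Bernoulli polynomial `B_r/r!`. -/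
noncomputable def bhat (b r k : ℕ) : ℂ :=
  ∫ x in Set.Ico (0 : ℝ) 1,
    ((bernoulliPoly r x / (r.factorial : ℝ) : ℝ) : ℂ) * (starRingEnd ℂ) (walsh b k x)

/-- The `(k,l)`-th Walsh coefficient `b̂_{r,per}(k,l)` of `(x,y) ↦ B̃_r(x-y)/r!`, where
`B̃_r` is the 1-periodic extension of the Bernoulli polynomial `B_r` from `[0,1)` to `ℝ`. -/
noncomputable def bhatPer (b r : ℕ) (k l : ℕ) : ℂ :=
  ∫ x in Set.Ico (0 : ℝ) 1, ∫ y in Set.Ico (0 : ℝ) 1,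
    ((bernoulliPoly r (Int.fract (x - y)) / (r.factorial : ℝ) : ℝ) : ℂ) *
      (starRingEnd ℂ) (walsh b k x) * walsh b l y

section Digits

lemma bdigit_zero (b k : ℕ) : bdigit b k 0 = k % b := by simp [bdigit]

lemma bdigit_succ (b k i : ℕ) : bdigit b k (i + 1) = bdigit b (k / b) i := by
  simp [bdigit, pow_succ', Nat.div_div_eq_div_mul]

lemma bdigit_sum_mul_pow {b : ℕ} {d : ℕ → ℕ} (hd : ∀ i, d i < b) (n i : ℕ) :
    bdigit b (∑ j ∈ Finset.range n, d j * b ^ j) i = if i < n then d i else 0 := by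
  induction n generalizing d i with
  | zero => simp [bdigit]
  | succ n ih =>
    have hsum : ∑ j ∈ Finset.range (n + 1), d j * b ^ j
        = d 0 + b * ∑ j ∈ Finset.range n, d (j + 1) * b ^ j := by
      rw [Finset.sum_range_succ', pow_zero, mul_one, add_comm, Finset.mul_sum]
      simp only [pow_succ', mul_left_comm]
    rw [hsum]
    cases i with
    | zero => simp [bdigit_zero, Nat.mod_eq_of_lt (hd 0)]
    | succ i =>
      rw [bdigit_succ, Nat.add_mul_div_left _ _ (Nat.zero_lt_of_lt (hd 0)),
        Nat.div_eq_of_lt (hd 0), zero_add, ih fun j ↦ hd (j + 1)]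
      simp

variable {b : ℕ} (hb : 1 < b)
include hb

lemma bdigit_eq_zero_of_le {k i : ℕ} (h : k ≤ i) : bdigit b k i = 0 := by
  simp [bdigit, Nat.div_eq_of_lt (h.trans_lt (Nat.lt_pow_self hb))]

lemma lt_of_bdigit_ne_zero {k i : ℕ} (h : bdigit b k i ≠ 0) : i < k :=
  not_le.mp fun hki ↦ h (bdigit_eq_zero_of_le hb hki)

lemma mem_bsupp {k i : ℕ} : i ∈ bsupp b k ↔ bdigit b k i ≠ 0 := by
  simp only [bsupp, Finset.mem_filter, Finset.mem_range, and_iff_right_iff_imp]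
  exact fun h ↦ (lt_of_bdigit_ne_zero hb h).trans k.lt_succ_self

lemma hamming_eq_sum_range {k n : ℕ} (hn : k ≤ n) :
    hamming b k = ∑ i ∈ Finset.range n, if bdigit b k i ≠ 0 then 1 else 0 := by
  rw [hamming, ← Finset.card_filter]
  congr 1
  ext i
  simp only [mem_bsupp hb, Finset.mem_filter, Finset.mem_range, iff_and_self]
  exact fun h ↦ (lt_of_bdigit_ne_zero hb h).trans_le hn

lemma hamming_eq_hamming_div_add (k : ℕ) :
    hamming b k = hamming b (k / b) + if k % b ≠ 0 then 1 else 0 := by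
  rw [hamming_eq_sum_range hb k.le_succ, Finset.sum_range_succ',
    hamming_eq_sum_range hb (k.div_le_self b)]
  simp only [bdigit_succ, bdigit_zero]

lemma bsupp_dsub_subset (k l : ℕ) : bsupp b (dsub b k l) ⊆ bsupp b k ∪ bsupp b l := by
  intro i hi
  rw [mem_bsupp hb, dsub, bdigit_sum_mul_pow fun _ ↦ Nat.mod_lt _ (by omega)] at hi
  rw [Finset.mem_union, mem_bsupp hb, mem_bsupp hb]
  by_contra! h
  simp [h.1, h.2] at hi

lemma hamming_dsub_le (k l : ℕ) : hamming b (dsub b k l) ≤ hamming b k + hamming b l :=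
  (Finset.card_le_card (bsupp_dsub_subset hb k l)).trans (Finset.card_union_le _ _)

end Digits

section Algebra

open Polynomial

lemma geom_sum_pow_eq_zero {R : Type*} [CommRing R] [IsDomain R] {ζ : R} {b m : ℕ}
    (hζ : IsPrimitiveRoot ζ b) (hm : ¬ b ∣ m) : ∑ j ∈ Finset.range b, (ζ ^ m) ^ j = 0 := by
  have hne : ζ ^ m - 1 ≠ 0 := sub_ne_zero.mpr fun h ↦ hm (hζ.dvd_of_pow_eq_one m h)
  refine (mul_eq_zero_iff_right hne).mp ?_
  rw [geom_sum_mul, pow_right_comm, hζ.pow_eq_one, one_pow, sub_self]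

variable {R : Type*} [CommSemiring R]

lemma comp_C_mul_X_mem_degreeLT {n : ℕ} {p : R[X]} (hp : p ∈ degreeLT R n) (a : R) :
    p.comp (C a * X) ∈ degreeLT R n := by
  rw [mem_degreeLT, degree_lt_iff_coeff_zero] at hp ⊢
  intro m hm
  rw [comp_C_mul_X_coeff, hp m hm, zero_mul]

lemma coeff_taylor_of_natDegree_le {p : R[X]} {n : ℕ} (hp : p.natDegree ≤ n) (r : R) :
    (taylor r p).coeff n = p.coeff n := by
  rcases hp.eq_or_lt with rfl | hlt
  · exact coeff_taylor_natDegree r p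
  · rw [coeff_eq_zero_of_natDegree_lt hlt,
      coeff_eq_zero_of_natDegree_lt (by rwa [natDegree_taylor])]

lemma sum_smul_taylor_mem_degreeLT {ι : Type*} {s : Finset ι} {c r : ι → R}
    (hc : ∑ i ∈ s, c i = 0) {p : R[X]} {n : ℕ} (hp : p ∈ degreeLT R (n + 1)) :
    ∑ i ∈ s, c i • taylor (r i) p ∈ degreeLT R n := by
  rw [mem_degreeLT, degree_lt_iff_coeff_zero]
  intro m hm
  have hpn : p.natDegree ≤ n := natDegree_le_iff_coeff_eq_zero.mpr <|
    (degree_lt_iff_coeff_zero p (n + 1)).mp (mem_degreeLT.mp hp)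
  simp only [finsetSum_coeff, coeff_smul, coeff_taylor_of_natDegree_le (hpn.trans hm),
    smul_eq_mul]
  rw [← Finset.sum_mul, hc, zero_mul]

end Algebra

section Walsh

open scoped ComplexConjugate

/-- The primitive `b`-th root of unity `ω_b = exp(2π√-1/b)`. -/
noncomputable def walshRoot (b : ℕ) : ℂ := Complex.exp (2 * Real.pi * Complex.I / b)

lemma isPrimitiveRoot_walshRoot {b : ℕ} (hb : b ≠ 0) : IsPrimitiveRoot (walshRoot b) b :=
  Complex.isPrimitiveRoot_exp b hb

lemma isPrimitiveRoot_conj_walshRoot {b : ℕ} (hb : b ≠ 0) :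
    IsPrimitiveRoot (conj (walshRoot b)) b :=
  (isPrimitiveRoot_walshRoot hb).map_of_injective (starRingEnd ℂ).injective

lemma walshRoot_ne_zero (b : ℕ) : walshRoot b ≠ 0 := Complex.exp_ne_zero _

lemma rdigit_one {b j : ℕ} (hj : j < b) {y : ℝ} (hy : y ∈ Set.Ico (0 : ℝ) 1) :
    rdigit b ((j + y) / b) 1 = j := by
  have hb : (b : ℝ) ≠ 0 := by exact_mod_cast Nat.ne_zero_of_lt hj
  have hfloor : ⌊(j : ℝ) + y⌋ = j := by
    simp [Int.floor_eq_zero_iff.mpr hy]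
  rw [rdigit, pow_one, div_mul_cancel₀ _ hb, hfloor]
  exact Int.emod_eq_of_lt (by positivity) (by exact_mod_cast hj)

lemma rdigit_succ_succ {b : ℕ} (hb : b ≠ 0) (j a : ℕ) (y : ℝ) :
    rdigit b ((j + y) / b) (a + 1 + 1) = rdigit b y (a + 1) := by
  have hshift : ((j : ℝ) + y) / b * (b : ℝ) ^ (a + 1 + 1)
      = y * (b : ℝ) ^ (a + 1) + ((b * (j * b ^ a) : ℤ) : ℝ) := by
    push_cast
    field_simp
    ring
  rw [rdigit, rdigit, hshift, Int.floor_add_intCast, Int.add_mul_emod_self_left]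

lemma walsh_eq_zpow (b k : ℕ) (x : ℝ) :
    walsh b k x
      = walshRoot b ^ ∑ a ∈ Finset.range (k + 1), (bdigit b k a : ℤ) * rdigit b x (a + 1) := by
  rw [walsh, walshRoot, ← Complex.exp_int_mul]
  push_cast
  rw [mul_comm]

lemma walsh_eq_zpow_of_le {b : ℕ} (hb : 1 < b) {k n : ℕ} (hn : k ≤ n) (x : ℝ) :
    walsh b k x
      = walshRoot b ^ ∑ a ∈ Finset.range n, (bdigit b k a : ℤ) * rdigit b x (a + 1) := by
  have hzero : ∀ m, k ≤ m → (bdigit b k m : ℤ) * rdigit b x (m + 1) = 0 := fun m hm ↦ by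
    rw [bdigit_eq_zero_of_le hb hm, Nat.cast_zero, zero_mul]
  rw [walsh_eq_zpow, Finset.eventually_constant_sum hzero k.le_succ,
    Finset.eventually_constant_sum hzero hn]

lemma walsh_add_div {b : ℕ} (hb : 1 < b) (k : ℕ) {j : ℕ} (hj : j < b) {y : ℝ}
    (hy : y ∈ Set.Ico (0 : ℝ) 1) :
    walsh b k ((j + y) / b) = (walshRoot b ^ (k % b)) ^ j * walsh b (k / b) y := by
  rw [walsh_eq_zpow_of_le hb k.le_succ, Finset.sum_range_succ',
    walsh_eq_zpow_of_le hb (k.div_le_self b), zpow_add₀ (walshRoot_ne_zero b), mul_comm]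
  simp only [rdigit_succ_succ (Nat.ne_zero_of_lt hb), bdigit_succ, zero_add, rdigit_one hj hy,
    bdigit_zero, ← Nat.cast_mul, zpow_natCast, pow_mul]

lemma measurable_walsh (b k : ℕ) : Measurable (walsh b k) := by
  have hdigit (a : ℕ) : Measurable fun x ↦ rdigit b x a :=
    (Measurable.of_discrete (f := fun z : ℤ ↦ z % (b : ℤ))).comp
      (Int.measurable_floor.comp (measurable_id.mul_const _))
  have hexponent : Measurable fun x : ℝ ↦
      ∑ a ∈ Finset.range (k + 1), (bdigit b k a : ℤ) * rdigit b x (a + 1) := by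
    fun_prop
  rw [funext (walsh_eq_zpow b k)]
  exact (Measurable.of_discrete (f := fun z : ℤ ↦ walshRoot b ^ z)).comp hexponent

lemma norm_walsh (b k : ℕ) (x : ℝ) : ‖walsh b k x‖ = 1 := by
  have hroot : ‖walshRoot b‖ = 1 := by
    rw [walshRoot, Complex.norm_exp]
    simp
  rw [walsh_eq_zpow, norm_zpow, hroot, one_zpow]

lemma intervalIntegrable_mul_conj_walsh {f : ℝ → ℂ} {s t : ℝ}
    (hf : IntervalIntegrable f volume s t) (b k : ℕ) :
    IntervalIntegrable (fun x ↦ f x * conj (walsh b k x)) volume s t := by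
  have hmeas : Measurable fun x ↦ conj (walsh b k x) :=
    Complex.continuous_conj.measurable.comp (measurable_walsh b k)
  rw [intervalIntegrable_iff] at hf ⊢
  exact hf.mul_bdd (c := 1) hmeas.aestronglyMeasurable (.of_forall fun x ↦ by simp [norm_walsh])

end Walsh

section WalshCoefficient

open scoped ComplexConjugate
open Polynomial

/-- The `k`-th `b`-adic Walsh coefficient `∫_0^1 f(x) conj(wal_k(x)) dx` of `f`. -/
noncomputable def walshCoeff (b k : ℕ) (f : ℝ → ℂ) : ℂ :=
  ∫ x in (0 : ℝ)..1, f x * conj (walsh b k x)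

lemma walshCoeff_const_mul (b k : ℕ) (c : ℂ) (f : ℝ → ℂ) :
    walshCoeff b k (fun x ↦ c * f x) = c * walshCoeff b k f := by
  simp only [walshCoeff, mul_assoc, intervalIntegral.integral_const_mul]

lemma walshCoeff_sum (b k : ℕ) {ι : Type*} {s : Finset ι} {f : ι → ℝ → ℂ}
    (hf : ∀ i ∈ s, IntervalIntegrable (f i) volume 0 1) :
    walshCoeff b k (fun x ↦ ∑ i ∈ s, f i x) = ∑ i ∈ s, walshCoeff b k (f i) := by
  simp only [walshCoeff, Finset.sum_mul]
  exact intervalIntegral.integral_finsetSum fun i hi ↦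
    intervalIntegrable_mul_conj_walsh (hf i hi) b k

lemma intervalIntegral_eq_sum_div {E : Type*} [NormedAddCommGroup E] [NormedSpace ℝ E] {f : ℝ → E}
    (hf : IntervalIntegrable f volume 0 1) {b : ℕ} (hb : b ≠ 0) :
    ∫ x in (0 : ℝ)..1, f x
      = (b : ℝ)⁻¹ • ∑ j ∈ Finset.range b, ∫ y in (0 : ℝ)..1, f ((j + y) / b) := by
  have hb' : (b : ℝ) ≠ 0 := Nat.cast_ne_zero.mpr hb
  have hpiece (j : ℕ) : ∫ x in ((j : ℝ) / b)..((j + 1 : ℕ) : ℝ) / b, f x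
      = (b : ℝ)⁻¹ • ∫ y in (0 : ℝ)..1, f ((j + y) / b) := by
    simp only [add_div]
    rw [intervalIntegral.integral_comp_add_div f hb', inv_smul_smul₀ hb']
    simp [add_div]
  have hmem {i : ℕ} (hi : i ≤ b) : (i : ℝ) / b ∈ Set.uIcc (0 : ℝ) 1 := by
    rw [Set.uIcc_of_le zero_le_one]
    exact ⟨by positivity, div_le_one_of_le₀ (Nat.cast_le.mpr hi) b.cast_nonneg⟩
  have hint (j : ℕ) (hj : j < b) :
      IntervalIntegrable f volume ((j : ℝ) / b) (((j + 1 : ℕ) : ℝ) / b) :=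
    hf.mono_set (Set.uIcc_subset_uIcc (hmem hj.le) (hmem hj))
  have hsum := intervalIntegral.sum_integral_adjacent_intervals (μ := volume) (f := f)
    (a := fun j : ℕ ↦ (j : ℝ) / b) hint
  rw [Nat.cast_zero, zero_div, div_self hb'] at hsum
  rw [← hsum, Finset.smul_sum]
  exact Finset.sum_congr rfl fun j _ ↦ hpiece j

lemma walshCoeff_eq_sum_walshCoeff_div {b : ℕ} (hb : 1 < b) (k : ℕ) {f : ℝ → ℂ}
    (hf : IntervalIntegrable f volume 0 1) :
    walshCoeff b k f = (b : ℂ)⁻¹ * ∑ j ∈ Finset.range b,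
      (conj (walshRoot b) ^ (k % b)) ^ j * walshCoeff b (k / b) fun y ↦ f ((j + y) / b) := by
  rw [walshCoeff, intervalIntegral_eq_sum_div (intervalIntegrable_mul_conj_walsh hf b k)
    (Nat.ne_zero_of_lt hb), Complex.real_smul, Complex.ofReal_inv, Complex.ofReal_natCast]
  congr 1
  refine Finset.sum_congr rfl fun j hj ↦ ?_
  rw [walshCoeff, ← intervalIntegral.integral_const_mul]
  refine intervalIntegral.integral_congr_Ioo_of_le zero_le_one fun y hy ↦ ?_
  simp only [walsh_add_div hb k (Finset.mem_range.mp hj) (Set.Ioo_subset_Ico_self hy), map_mul,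
    map_pow]
  ring

/-- The transfer operator `p ↦ ∑_{0 ≤ j < b} ω_b^{-κ_0 j} p((j + X) / b)` on polynomials, where
`κ_0` is the lowest `b`-adic digit of `k`. Up to the factor `b⁻¹`, the `k`-th Walsh coefficient of
`p` is the `⌊k/b⌋`-th one of its transform. -/
noncomputable def walshTransfer (b k : ℕ) (p : ℂ[X]) : ℂ[X] :=
  ∑ j ∈ Finset.range b,
    (conj (walshRoot b) ^ (k % b)) ^ j • taylor (j : ℂ) (p.comp (C (b : ℂ)⁻¹ * X))

lemma eval_walshTransfer (b k : ℕ) (p : ℂ[X]) (y : ℂ) :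
    (walshTransfer b k p).eval y
      = ∑ j ∈ Finset.range b, (conj (walshRoot b) ^ (k % b)) ^ j * p.eval ((j + y) / b) := by
  simp [walshTransfer, eval_finsetSum, taylor_eval, div_eq_inv_mul, add_comm]

lemma intervalIntegrable_eval (p : ℂ[X]) (s t : ℝ) :
    IntervalIntegrable (fun x : ℝ ↦ p.eval (x : ℂ)) volume s t :=
  Continuous.intervalIntegrable (by fun_prop) s t

lemma walshCoeff_eval_eq_walshCoeff_walshTransfer {b : ℕ} (hb : 1 < b) (k : ℕ) (p : ℂ[X]) :
    walshCoeff b k (fun x ↦ p.eval (x : ℂ))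
      = (b : ℂ)⁻¹ * walshCoeff b (k / b) fun y ↦ (walshTransfer b k p).eval (y : ℂ) := by
  rw [walshCoeff_eq_sum_walshCoeff_div hb k (intervalIntegrable_eval p 0 1)]
  simp only [eval_walshTransfer]
  rw [walshCoeff_sum b (k / b) fun j _ ↦ Continuous.intervalIntegrable (by fun_prop) 0 1]
  simp only [walshCoeff_const_mul, Complex.ofReal_div, Complex.ofReal_add, Complex.ofReal_natCast]

lemma walshTransfer_mem_degreeLT (b k : ℕ) {n : ℕ} {p : ℂ[X]} (hp : p ∈ degreeLT ℂ n) :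
    walshTransfer b k p ∈ degreeLT ℂ n := by
  refine Submodule.sum_mem _ fun j _ ↦ Submodule.smul_mem _ _ ?_
  rw [mem_degreeLT, degree_taylor, ← mem_degreeLT]
  exact comp_C_mul_X_mem_degreeLT hp _

lemma walshTransfer_mem_degreeLT_of_mod_ne_zero {b k : ℕ} (hb : b ≠ 0) (hk : k % b ≠ 0) {n : ℕ}
    {p : ℂ[X]} (hp : p ∈ degreeLT ℂ (n + 1)) : walshTransfer b k p ∈ degreeLT ℂ n := by
  have hndvd : ¬ b ∣ k % b := fun h ↦
    hk (Nat.eq_zero_of_dvd_of_lt h (Nat.mod_lt k (Nat.pos_of_ne_zero hb)))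
  exact sum_smul_taylor_mem_degreeLT
    (geom_sum_pow_eq_zero (isPrimitiveRoot_conj_walshRoot hb) hndvd)
    (comp_C_mul_X_mem_degreeLT hp _)

theorem walshCoeff_eval_eq_zero {b : ℕ} (hb : 1 < b) (k : ℕ) {p : ℂ[X]}
    (hp : p ∈ degreeLT ℂ (hamming b k)) : walshCoeff b k (fun x ↦ p.eval (x : ℂ)) = 0 := by
  induction k using Nat.strong_induction_on generalizing p with
  | _ k ih =>
    rcases k.eq_zero_or_pos with rfl | hk
    · obtain rfl : p = 0 := by simpa [hamming, bsupp, bdigit, mem_degreeLT] using hp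
      simp [walshCoeff]
    · rw [hamming_eq_hamming_div_add hb] at hp
      have htransfer : walshTransfer b k p ∈ degreeLT ℂ (hamming b (k / b)) := by
        split_ifs at hp with hmod
        · exact walshTransfer_mem_degreeLT_of_mod_ne_zero (Nat.ne_zero_of_lt hb) hmod hp
        · exact walshTransfer_mem_degreeLT b k hp
      rw [walshCoeff_eval_eq_walshCoeff_walshTransfer hb,
        ih (k / b) (Nat.div_lt_self hk hb) htransfer, mul_zero]

end WalshCoefficient

section Bernoulli

open scoped ComplexConjugate
open Polynomial

lemma bernoulli_mem_degreeLT (r : ℕ) : Polynomial.bernoulli r ∈ degreeLT ℚ (r + 1) := by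
  rw [mem_degreeLT, degree_lt_iff_coeff_zero]
  intro m hm
  rw [coeff_bernoulli, if_neg (by omega)]

lemma ofReal_bernoulliPoly (r : ℕ) (x : ℝ) :
    (bernoulliPoly r x : ℂ) = ((Polynomial.bernoulli r).map (algebraMap ℚ ℂ)).eval (x : ℂ) := by
  rw [bernoulliPoly, eval_map_algebraMap, ← Complex.coe_algebraMap, aeval_algebraMap_apply]

lemma bhat_eq_walshCoeff (b r k : ℕ) :
    bhat b r k = (r.factorial : ℂ)⁻¹ * walshCoeff b k fun x ↦ (bernoulliPoly r x : ℂ) := by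
  rw [bhat, integral_Ico_eq_integral_Ioc, ← intervalIntegral.integral_of_le zero_le_one,
    ← walshCoeff_const_mul, walshCoeff]
  push_cast
  simp only [div_eq_inv_mul]

lemma bhat_eq_zero_of_lt_hamming {b r k : ℕ} (hb : 1 < b) (h : r < hamming b k) :
    bhat b r k = 0 := by
  have hdeg : (Polynomial.bernoulli r).map (algebraMap ℚ ℂ) ∈ degreeLT ℂ (hamming b k) := by
    rw [mem_degreeLT, degree_map, ← mem_degreeLT]
    exact degreeLT_mono h (bernoulli_mem_degreeLT r)
  rw [bhat_eq_walshCoeff]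
  simp only [ofReal_bernoulliPoly]
  rw [walshCoeff_eval_eq_zero hb k hdeg, mul_zero]

theorem bhat_sparse_general {b k l σ τ : ℕ} (hb : 1 < b)
    (h : σ + τ < hamming b (dsub b k l)) : bhat b σ k * conj (bhat b τ l) = 0 := by
  have hle := hamming_dsub_le hb k l
  obtain hk | hl : σ < hamming b k ∨ τ < hamming b l := by omega
  · rw [bhat_eq_zero_of_lt_hamming hb hk, zero_mul]
  · rw [bhat_eq_zero_of_lt_hamming hb hl, map_zero, mul_zero]

end Bernoulli

/-- Lemma 5. For a prime `b` and `α ≥ 2`, if `k, l ∈ ℕ₀` satisfy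
`κ(k ⊖ l) > 2α`, then `b̂_τ(k) · conj(b̂_τ(l)) = 0` for every `0 ≤ τ ≤ α`. -/
theorem bhat_sparse (b α : ℕ) (hb : b.Prime) (hα : 2 ≤ α) (k l : ℕ)
    (h : 2 * α < hamming b (dsub b k l)) :
    ∀ τ ≤ α, bhat b τ k * (starRingEnd ℂ) (bhat b τ l) = 0 :=
  fun _ hτ ↦ bhat_sparse_general hb.one_lt (by omega)
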